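/- If R : Fin n → ℝ is generalized pairwise valid, then there exist a feasible pairing scheme f and a generalized pairwise valid rate assignment R' such that: R' i = H[X i] whenever f i = root; R' i = H[X i | X j] whenever f i = child j; for each matched pair {i, j}, (R' i, R' j) ∈ S i j and Q i (R' i) + Q j (R' j) = sInf { Q i a + Q j b : (a, b) ∈ S i j }; and Σ_{i} Q i (R' i) ≤ Σ_{i} Q i (R i). -/

import Mathlib

open MeasureTheory ProbabilityTheory

/-- Shannon entropy (in nats) of a random variable. -/
noncomputable def shEntropy {Ω : Type*} [MeasurableSpace Ω] {S : Type*}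
    (μ : Measure Ω) (X : Ω → S) : ℝ :=
  ∑' x : S, Real.negMulLog (μ (X ⁻¹' {x})).toReal

/-- Conditional Shannon entropy `H[X | Y]`. -/
noncomputable def shCondEntropy {Ω : Type*} [MeasurableSpace Ω] {S T : Type*}
    (μ : Measure Ω) (X : Ω → S) (Y : Ω → T) : ℝ :=
  ∑' y : T, (μ (Y ⁻¹' {y})).toReal * shEntropy (ProbabilityTheory.cond μ (Y ⁻¹' {y})) X

/-- The power needed at node `i` (channel gain `γ i`) to support rate `r` (in nats). -/
noncomputable def Qpow {n : ℕ} (γ : Fin n → ℝ) (i : Fin n) (r : ℝ) : ℝ :=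
  (Real.exp r - 1) / γ i

/-- The two-dimensional Slepian-Wolf region of the pair of sources `X i`, `X j`. -/
def SWregion {Ω S : Type*} [MeasurableSpace Ω] {n : ℕ}
    (μ : Measure Ω) (X : Fin n → Ω → S) (i j : Fin n) : Set (ℝ × ℝ) :=
  {q : ℝ × ℝ | q.1 ≥ shCondEntropy μ (X i) (X j) ∧ q.2 ≥ shCondEntropy μ (X j) (X i) ∧
    q.1 + q.2 ≥ shEntropy μ (fun ω => (X i ω, X j ω))}

/-- The Slepian-Wolf region intersected with the peak power constraints. -/
def Sregion {Ω S : Type*} [MeasurableSpace Ω] {n : ℕ}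
    (μ : Measure Ω) (X : Fin n → Ω → S) (γ : Fin n → ℝ) (Pmax : ℝ)
    (i j : Fin n) : Set (ℝ × ℝ) :=
  {q : ℝ × ℝ | q ∈ SWregion μ X i j ∧ Qpow γ i q.1 ≤ Pmax ∧ Qpow γ j q.2 ≤ Pmax}

/-- `X i` is initially decodable under `R` if `R i ≥ H[X i]`, or together with some
other source `X j` the rate pair `(R i, R j)` lies in their Slepian-Wolf region. -/
def InitiallyDecodable {Ω S : Type*} [MeasurableSpace Ω] {n : ℕ}
    (μ : Measure Ω) (X : Fin n → Ω → S) (R : Fin n → ℝ) (i : Fin n) : Prop :=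
  R i ≥ shEntropy μ (X i) ∨ ∃ j : Fin n, j ≠ i ∧ (R i, R j) ∈ SWregion μ X i j

/-- The generalized pairwise property: each source is initially decodable, or is
decodable via a chain of sources starting from an initially decodable one. -/
def GenPairwiseProperty {Ω S : Type*} [MeasurableSpace Ω] {n : ℕ}
    (μ : Measure Ω) (X : Fin n → Ω → S) (R : Fin n → ℝ) : Prop :=
  ∀ i : Fin n, InitiallyDecodable μ X R i ∨
    ∃ (k : ℕ) (s : ℕ → Fin n), 1 ≤ k ∧
      InitiallyDecodable μ X R (s 1) ∧
      (∀ j : ℕ, 2 ≤ j → j ≤ k → R (s j) ≥ shCondEntropy μ (X (s j)) (X (s (j - 1)))) ∧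
      R i ≥ shCondEntropy μ (X i) (X (s k))

/-- A rate assignment is generalized pairwise valid if it satisfies the generalized
pairwise property and every node meets the peak power constraint. -/
def GenPairwiseValid {Ω S : Type*} [MeasurableSpace Ω] {n : ℕ}
    (μ : Measure Ω) (X : Fin n → Ω → S) (γ : Fin n → ℝ) (Pmax : ℝ)
    (R : Fin n → ℝ) : Prop :=
  GenPairwiseProperty μ X R ∧ ∀ i : Fin n, Qpow γ i (R i) ≤ Pmax

/-- The decoding relation of a rate assignment: `a` can help decode `b` if
`H[X b | X a] ≤ R b`. -/
def decRel {Ω S : Type*} [MeasurableSpace Ω] {n : ℕ}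
    (μ : Measure Ω) (X : Fin n → Ω → S) (R : Fin n → ℝ) : Fin n → Fin n → Prop :=
  fun a b => shCondEntropy μ (X b) (X a) ≤ R b

/-- The mode of a node in a pairing scheme: a root (transmitting at full entropy),
a child of some node `j` (transmitting at conditional entropy given `X j`), or
matched with some node `j` (jointly decoded with `X j`). -/
inductive PairMode (n : ℕ) where
  | root : PairMode n
  | child (j : Fin n) : PairMode n
  | matched (j : Fin n) : PairMode n
deriving DecidableEq

/-- A pairing scheme: each node is a root, a child of another node, or matched with
another node; matching is symmetric, no two nodes are children of each other, and the
associated undirected graph is acyclic. -/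
structure PairingScheme (n : ℕ) where
  mode : Fin n → PairMode n
  child_ne : ∀ i j : Fin n, mode i = PairMode.child j → j ≠ i
  matched_ne : ∀ i j : Fin n, mode i = PairMode.matched j → j ≠ i
  matched_symm : ∀ i j : Fin n, mode i = PairMode.matched j ↔ mode j = PairMode.matched i
  no_mutual_child : ∀ i j : Fin n, i ≠ j →
    ¬(mode i = PairMode.child j ∧ mode j = PairMode.child i)
  acyclic : (SimpleGraph.fromRel fun i j =>
    mode i = PairMode.matched j ∨ mode i = PairMode.child j ∨
      mode j = PairMode.child i).IsAcyclic

/-- A pairing scheme is feasible if all the prescribed transmissions can be realized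
within the peak power constraint. -/
def PairingScheme.Feasible {Ω S : Type*} [MeasurableSpace Ω] {n : ℕ}
    (f : PairingScheme n) (μ : Measure Ω) (X : Fin n → Ω → S) (γ : Fin n → ℝ)
    (Pmax : ℝ) : Prop :=
  (∀ i : Fin n, f.mode i = PairMode.root → Qpow γ i (shEntropy μ (X i)) ≤ Pmax) ∧
  (∀ i j : Fin n, f.mode i = PairMode.child j →
    Qpow γ i (shCondEntropy μ (X i) (X j)) ≤ Pmax) ∧
  (∀ i j : Fin n, f.mode i = PairMode.matched j →
    (Sregion μ X γ Pmax i j).Nonempty)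

/-- The minimum sum power of a jointly decoded pair `(i, j)`. -/
noncomputable def pairPower {Ω S : Type*} [MeasurableSpace Ω] {n : ℕ}
    (μ : Measure Ω) (X : Fin n → Ω → S) (γ : Fin n → ℝ) (Pmax : ℝ)
    (i j : Fin n) : ℝ :=
  sInf {x : ℝ | ∃ a b : ℝ, (a, b) ∈ Sregion μ X γ Pmax i j ∧ x = Qpow γ i a + Qpow γ j b}

/-- The power contribution of node `i` in a pairing scheme; each member of a matched
pair contributes half of the pair power, so that the pair is counted once in total. -/
noncomputable def schemeContrib {Ω S : Type*} [MeasurableSpace Ω] {n : ℕ}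
    (μ : Measure Ω) (X : Fin n → Ω → S) (γ : Fin n → ℝ) (Pmax : ℝ)
    (f : PairingScheme n) (i : Fin n) : ℝ :=
  match f.mode i with
  | PairMode.root => Qpow γ i (shEntropy μ (X i))
  | PairMode.child j => Qpow γ i (shCondEntropy μ (X i) (X j))
  | PairMode.matched j => (1 / 2) * pairPower μ X γ Pmax i j

/-- The total cost (sum power) of a feasible pairing scheme: roots contribute the power
of their entropy, children the power of their conditional entropy, and each matched
pair (counted once) its minimum sum power. -/
noncomputable def schemeCost {Ω S : Type*} [MeasurableSpace Ω] {n : ℕ}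
    (μ : Measure Ω) (X : Fin n → Ω → S) (γ : Fin n → ℝ) (Pmax : ℝ)
    (f : PairingScheme n) : ℝ :=
  ∑ i : Fin n, schemeContrib μ X γ Pmax f i

theorem acyclic_of_rank {V : Type*} (G : SimpleGraph V) (r : V → ℕ)
    (h : ∀ v u w, G.Adj v u → G.Adj v w → r u ≤ r v → r w ≤ r v → u = w) : G.IsAcyclic := by
  classical
  intro a c hc
  obtain ⟨v, hv, hmax⟩ := c.support.toFinset.exists_max_image r ⟨a, by simp⟩
  have hv' : v ∈ c.support := by simpa using hv
  have hc' := hc.rotate hv'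
  have hmem : ∀ x ∈ (c.rotate v hv').support, r x ≤ r v := by
    intro x hx
    apply hmax
    rw [List.mem_toFinset]
    simpa using hx
  refine hc'.snd_ne_penultimate ?_
  exact h v _ _ (SimpleGraph.Walk.adj_snd hc'.not_nil)
    (SimpleGraph.Walk.adj_penultimate hc'.not_nil).symm
    (hmem _ (SimpleGraph.Walk.getVert_mem_support _ _))
    (hmem _ (SimpleGraph.Walk.getVert_mem_support _ _))

section
variable {Ω S : Type*} [MeasurableSpace Ω] {n : ℕ} (μ : Measure Ω) (X : Fin n → Ω → S)
  (γ : Fin n → ℝ) (Pmax : ℝ)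

theorem joint_symm (i j : Fin n) : shEntropy μ (fun ω => (X i ω, X j ω)) =
    shEntropy μ (fun ω => (X j ω, X i ω)) := by
  unfold shEntropy
  rw [← (Equiv.prodComm S S).tsum_eq]
  refine tsum_congr fun x => ?_
  congr 3
  ext ω
  simp [Prod.ext_iff, and_comm]

theorem SW_symm {i j : Fin n} {a b : ℝ} (h : (a, b) ∈ SWregion μ X i j) :
    (b, a) ∈ SWregion μ X j i := by
  obtain ⟨h1, h2, h3⟩ := h
  refine ⟨h2, h1, ?_⟩
  rw [joint_symm]
  simp only at h3 ⊢
  linarith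

theorem S_symm {i j : Fin n} {a b : ℝ} (h : (a, b) ∈ Sregion μ X γ Pmax i j) :
    (b, a) ∈ Sregion μ X γ Pmax j i :=
  ⟨SW_symm μ X h.1, h.2.2, h.2.1⟩

theorem pairPower_symm (i j : Fin n) :
    pairPower μ X γ Pmax i j = pairPower μ X γ Pmax j i := by
  unfold pairPower
  congr 1
  ext x
  constructor
  · rintro ⟨a, b, h, rfl⟩
    exact ⟨b, a, S_symm μ X γ Pmax h, add_comm _ _⟩
  · rintro ⟨a, b, h, rfl⟩
    exact ⟨b, a, S_symm μ X γ Pmax h, add_comm _ _⟩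

theorem Qpow_mono (hγ : ∀ i, 0 < γ i) (i : Fin n) {a b : ℝ} (h : a ≤ b) :
    Qpow γ i a ≤ Qpow γ i b := by
  unfold Qpow
  have := (hγ i).le
  gcongr

theorem Qpow_cont (i : Fin n) : Continuous (Qpow γ i) := by
  unfold Qpow
  fun_prop

theorem le_of_Qpow (hγ : ∀ i, 0 < γ i) (i : Fin n) {a : ℝ} (h : Qpow γ i a ≤ Pmax) :
    a ≤ Pmax * γ i := by
  unfold Qpow at h
  rw [div_le_iff₀ (hγ i)] at h
  have := Real.add_one_le_exp a
  linarith

theorem S_compact (hγ : ∀ i, 0 < γ i) (i j : Fin n) : IsCompact (Sregion μ X γ Pmax i j) := by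
  refine (isCompact_Icc (a := (shCondEntropy μ (X i) (X j), shCondEntropy μ (X j) (X i)))
    (b := (Pmax * γ i, Pmax * γ j))).of_isClosed_subset ?_ ?_
  · have h1 := Qpow_cont γ i
    have h2 := Qpow_cont γ j
    refine IsClosed.and (IsClosed.and ?_ (IsClosed.and ?_ ?_)) (IsClosed.and ?_ ?_) <;>
    exact isClosed_le (by fun_prop) (by fun_prop)
  · rintro ⟨a, b⟩ ⟨⟨h1, h2, _⟩, h4, h5⟩
    exact ⟨⟨h1, h2⟩, ⟨le_of_Qpow γ Pmax hγ i h4, le_of_Qpow γ Pmax hγ j h5⟩⟩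

theorem exists_min (hγ : ∀ i, 0 < γ i) (i j : Fin n) (hne : (Sregion μ X γ Pmax i j).Nonempty) :
    ∃ q : ℝ × ℝ, q ∈ Sregion μ X γ Pmax i j ∧
      Qpow γ i q.1 + Qpow γ j q.2 = pairPower μ X γ Pmax i j ∧
      ∀ a b, (a, b) ∈ Sregion μ X γ Pmax i j →
        pairPower μ X γ Pmax i j ≤ Qpow γ i a + Qpow γ j b := by
  have h1 := Qpow_cont γ i
  have h2 := Qpow_cont γ j
  obtain ⟨q, hq, hmin⟩ := (S_compact μ X γ Pmax hγ i j).exists_isMinOn hne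
    (f := fun q : ℝ × ℝ => Qpow γ i q.1 + Qpow γ j q.2) (by fun_prop)
  have hl : IsLeast {x : ℝ | ∃ a b : ℝ, (a, b) ∈ Sregion μ X γ Pmax i j ∧
      x = Qpow γ i a + Qpow γ j b} (Qpow γ i q.1 + Qpow γ j q.2) := by
    refine ⟨⟨q.1, q.2, hq, rfl⟩, ?_⟩
    rintro x ⟨a, b, hab, rfl⟩
    exact hmin hab
  have he : pairPower μ X γ Pmax i j = Qpow γ i q.1 + Qpow γ j q.2 := hl.csInf_eq
  refine ⟨q, hq, he.symm, fun a b hab => ?_⟩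
  rw [he]
  exact hmin hab

/-- A maximal matching, as an involution. -/
theorem exists_matching (A : Fin n → Fin n → Prop) (hA : ∀ i j, A i j → A j i) :
    ∃ m : Fin n → Fin n, (∀ i, m (m i) = i) ∧ (∀ i, m i ≠ i → A i (m i)) ∧
      ∀ i j, i ≠ j → A i j → m i = i → m j ≠ j := by
  classical
  obtain ⟨m, hm, hmax⟩ := (Finset.univ.filter fun m : Fin n → Fin n =>
      (∀ i, m (m i) = i) ∧ (∀ i, m i ≠ i → A i (m i))).exists_max_image
    (fun m => (Finset.univ.filter fun i => m i ≠ i).card) ⟨id, by simp⟩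
  simp only [Finset.mem_filter, Finset.mem_univ, true_and] at hm hmax
  refine ⟨m, hm.1, hm.2, fun i j hij hAij hi hj => ?_⟩
  have key := hmax (fun k => if k = i then j else if k = j then i else m k) ⟨?_, ?_⟩
  · refine absurd key (not_le.mpr (Finset.card_lt_card ?_))
    rw [Finset.ssubset_iff_of_subset]
    · exact ⟨i, by simp [hij.symm], by simp [hi]⟩
    · intro k hk
      simp only [Finset.mem_filter, Finset.mem_univ, true_and] at hk ⊢
      grind
  · intro k
    have h1 := hm.1
    grind
  · intro k hk
    have h1 := hm.2
    grind

/-- Reachable within `k` steps from `B`. -/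
def ReachIn (B : Fin n → Prop) (r : Fin n → Fin n → Prop) : ℕ → Fin n → Prop
  | 0, i => B i
  | k + 1, i => ∃ p, ReachIn B r k p ∧ r p i

theorem exists_parent (B : Fin n → Prop) (r : Fin n → Fin n → Prop)
    (h : ∀ i, ∃ k, ReachIn B r k i) :
    ∃ (rank : Fin n → ℕ) (p : Fin n → Fin n),
      ∀ i, (B i → rank i = 0) ∧ (¬ B i → rank (p i) < rank i ∧ r (p i) i) := by
  classical
  have : ∀ i, ∃ q, ¬ B i → Nat.find (h q) < Nat.find (h i) ∧ r q i := by
    intro i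
    by_cases hB : B i
    · exact ⟨i, fun h => absurd hB h⟩
    have hs := Nat.find_spec (h i)
    rcases hk : Nat.find (h i) with _ | k
    · rw [hk] at hs
      exact absurd hs hB
    · rw [hk] at hs
      obtain ⟨q, hq, hr⟩ := hs
      exact ⟨q, fun _ => ⟨Nat.lt_succ_of_le (Nat.find_min' _ hq), hr⟩⟩
  choose p hp using this
  refine ⟨fun i => Nat.find (h i), p, fun i => ⟨fun hB => ?_, hp i⟩⟩
  exact (Nat.find_eq_zero (h i)).mpr hB

theorem chain_step (R : Fin n → ℝ) (p i : Fin n)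
    (hp : InitiallyDecodable μ X R p ∨ ∃ (k : ℕ) (s : ℕ → Fin n), 1 ≤ k ∧
      InitiallyDecodable μ X R (s 1) ∧
      (∀ j : ℕ, 2 ≤ j → j ≤ k → R (s j) ≥ shCondEntropy μ (X (s j)) (X (s (j - 1)))) ∧
      R p ≥ shCondEntropy μ (X p) (X (s k)))
    (hi : R i ≥ shCondEntropy μ (X i) (X p)) :
    ∃ (k : ℕ) (s : ℕ → Fin n), 1 ≤ k ∧
      InitiallyDecodable μ X R (s 1) ∧
      (∀ j : ℕ, 2 ≤ j → j ≤ k → R (s j) ≥ shCondEntropy μ (X (s j)) (X (s (j - 1)))) ∧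
      R i ≥ shCondEntropy μ (X i) (X (s k)) := by
  rcases hp with hp | ⟨k, s, hk, h1, h2, h3⟩
  · exact ⟨1, fun _ => p, le_rfl, hp, fun j _ _ => by omega, hi⟩
  · refine ⟨k + 1, fun j => if j ≤ k then s j else p, by omega, by simpa [hk] using h1, ?_, ?_⟩
    · intro j hj hj'
      rcases Nat.lt_or_ge k j with h | h
      · obtain rfl : j = k + 1 := by omega
        simpa using h3
      · have h' : j - 1 ≤ k := by omega
        simp only [h, h', if_true]
        exact h2 j hj h
    · simpa using hi

end

/-- Any generalized pairwise valid rate assignment is dominated (in sum power) by a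
generalized pairwise valid rate assignment described by a feasible pairing scheme. -/
theorem exists_scheme_le_of_genPairwiseValid
    {Ω S : Type*} [MeasurableSpace Ω] [MeasurableSpace S] [MeasurableSingletonClass S]
    (μ : Measure Ω) [IsProbabilityMeasure μ] {n : ℕ} (hn : 1 ≤ n)
    (X : Fin n → Ω → S) (hX : ∀ i, Measurable (X i))
    (hfin : ∀ i, (Set.range (X i)).Finite)
    (γ : Fin n → ℝ) (hγ : ∀ i, 0 < γ i) (Pmax : ℝ) (hP : 0 < Pmax)
    (R : Fin n → ℝ) (hR : GenPairwiseValid μ X γ Pmax R) :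
    ∃ (f : PairingScheme n) (R' : Fin n → ℝ),
      f.Feasible μ X γ Pmax ∧ GenPairwiseValid μ X γ Pmax R' ∧
      (∀ i : Fin n, f.mode i = PairMode.root → R' i = shEntropy μ (X i)) ∧
      (∀ i j : Fin n, f.mode i = PairMode.child j → R' i = shCondEntropy μ (X i) (X j)) ∧
      (∀ i j : Fin n, f.mode i = PairMode.matched j →
        (R' i, R' j) ∈ Sregion μ X γ Pmax i j ∧
        Qpow γ i (R' i) + Qpow γ j (R' j) = pairPower μ X γ Pmax i j) ∧
      (∑ i : Fin n, Qpow γ i (R' i)) ≤ (∑ i : Fin n, Qpow γ i (R i)) := by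
  classical
  obtain ⟨hprop, hpow⟩ := hR
  obtain ⟨m, hinv, hmatch, hmaxl⟩ := exists_matching (n := n)
    (fun i j => (R i, R j) ∈ SWregion μ X i j) (fun i j h => SW_symm μ X h)
  have hinit : ∀ i, InitiallyDecodable μ X R i →
      ∃ k, ReachIn (fun i => m i ≠ i ∨ R i ≥ shEntropy μ (X i)) (decRel μ X R) k i := by
    rintro i (h | ⟨j, hj, hSW⟩)
    · exact ⟨0, Or.inr h⟩
    · by_cases hi : m i = i
      · exact ⟨1, j, Or.inl (hmaxl i j hj.symm hSW hi), hSW.1⟩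
      · exact ⟨0, Or.inl hi⟩
  have hreach : ∀ i, ∃ k, ReachIn (fun i => m i ≠ i ∨ R i ≥ shEntropy μ (X i))
      (decRel μ X R) k i := by
    intro i
    rcases hprop i with h | ⟨k, s, hk, h1, h2, h3⟩
    · exact hinit i h
    · have : ∀ j, 1 ≤ j → j ≤ k → ∃ t, ReachIn (fun i => m i ≠ i ∨ R i ≥ shEntropy μ (X i))
          (decRel μ X R) t (s j) := by
        intro j hj
        induction j, hj using Nat.le_induction with
        | base => exact fun _ => hinit _ h1
        | succ j hj ih =>
          intro hjk
          obtain ⟨t, ht⟩ := ih (by omega)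
          exact ⟨t + 1, s j, ht, h2 (j + 1) (by omega) hjk⟩
      obtain ⟨t, ht⟩ := this k hk le_rfl
      exact ⟨t + 1, s k, ht, h3⟩
  obtain ⟨rank, p, hp⟩ := exists_parent _ _ hreach
  have hSmem : ∀ i, m i ≠ i → (R i, R (m i)) ∈ Sregion μ X γ Pmax i (m i) :=
    fun i hi => ⟨hmatch i hi, hpow i, hpow (m i)⟩
  have hq : ∀ i, ∃ q : ℝ × ℝ, m i ≠ i → q ∈ Sregion μ X γ Pmax i (m i) ∧
      Qpow γ i q.1 + Qpow γ (m i) q.2 = pairPower μ X γ Pmax i (m i) ∧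
      ∀ a b, (a, b) ∈ Sregion μ X γ Pmax i (m i) →
        pairPower μ X γ Pmax i (m i) ≤ Qpow γ i a + Qpow γ (m i) b := by
    intro i
    by_cases hi : m i = i
    · exact ⟨0, fun h => absurd hi h⟩
    · obtain ⟨q, hq⟩ := exists_min μ X γ Pmax hγ i (m i) ⟨_, hSmem i hi⟩
      exact ⟨q, fun _ => hq⟩
  choose q hq using hq
  let mode : Fin n → PairMode n := fun i => if m i ≠ i then .matched (m i) else
    if R i ≥ shEntropy μ (X i) then .root else .child (p i)
  let R' : Fin n → ℝ := fun i => if m i ≠ i then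
      (if i < m i then (q i).1 else (q (m i)).2) else
    if R i ≥ shEntropy μ (X i) then shEntropy μ (X i) else shCondEntropy μ (X i) (X (p i))
  have hmode_m : ∀ i j, mode i = .matched j ↔ m i ≠ i ∧ m i = j := by
    intro i j
    simp only [mode]
    split_ifs <;> simp_all
  have hmode_c : ∀ i j, mode i = .child j ↔
      m i = i ∧ ¬ R i ≥ shEntropy μ (X i) ∧ p i = j := by
    intro i j
    simp only [mode]
    split_ifs <;> simp_all
  have hmode_r : ∀ i, mode i = .root ↔ m i = i ∧ R i ≥ shEntropy μ (X i) := by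
    intro i
    simp only [mode]
    split_ifs <;> simp_all
  have hchild : ∀ i j, mode i = .child j → rank j < rank i ∧ decRel μ X R j i := by
    intro i j h
    rw [hmode_c] at h
    obtain ⟨h1, h2, rfl⟩ := h
    exact (hp i).2 (by rintro (h | h); exacts [h h1, h2 h])
  have hrank0 : ∀ i j, mode i = .matched j → rank i = 0 := by
    intro i j h
    rw [hmode_m] at h
    exact (hp i).1 (Or.inl h.1)
  have hmsymm : ∀ i j, mode i = .matched j → mode j = .matched i := by
    intro i j h
    rw [hmode_m] at h ⊢
    obtain ⟨h1, rfl⟩ := h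
    rw [hinv]
    exact ⟨h1.symm, rfl⟩
  have hacyc : (SimpleGraph.fromRel fun i j =>
      mode i = PairMode.matched j ∨ mode i = PairMode.child j ∨
      mode j = PairMode.child i).IsAcyclic := by
    refine acyclic_of_rank _ rank ?_
    have key : ∀ v u, (SimpleGraph.fromRel fun i j =>
      mode i = PairMode.matched j ∨ mode i = PairMode.child j ∨
      mode j = PairMode.child i).Adj v u → rank u ≤ rank v →
        mode v = .matched u ∨ mode v = .child u := by
      intro v u h hr
      rw [SimpleGraph.fromRel_adj] at h
      rcases h.2 with (h | h | h) | (h | h | h)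
      · exact Or.inl h
      · exact Or.inr h
      · exact absurd (hchild _ _ h).1 (by omega)
      · exact Or.inl (hmsymm _ _ h)
      · exact absurd (hchild _ _ h).1 (by omega)
      · exact Or.inr h
    intro v u w hu hw hru hrw
    rcases key v u hu hru with h | h <;> rcases key v w hw hrw with h' | h' <;>
      rw [h] at h' <;> simpa using h'
  have hR'_r : ∀ i, mode i = .root → R' i = shEntropy μ (X i) := by
    intro i h
    rw [hmode_r] at h
    simp [R', h.1, h.2]
  have hR'_c : ∀ i j, mode i = .child j → R' i = shCondEntropy μ (X i) (X j) := by
    intro i j h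
    rw [hmode_c] at h
    obtain ⟨h1, h2, rfl⟩ := h
    simp only [R', h1, h2, ne_eq, not_true_eq_false, if_false]
  have hR'_m0 : ∀ i, m i ≠ i → (R' i, R' (m i)) ∈ Sregion μ X γ Pmax i (m i) ∧
        Qpow γ i (R' i) + Qpow γ (m i) (R' (m i)) = pairPower μ X γ Pmax i (m i) := by
    intro i hi
    have hi' : m (m i) ≠ m i := by rw [hinv]; exact hi.symm
    rcases lt_or_gt_of_ne hi with h | h
    · have e1 : R' i = (q (m i)).2 := by simp only [R', hi, not_lt.mpr h.le, ne_eq, not_false_eq_true, if_true, if_false]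
      have e2 : R' (m i) = (q (m i)).1 := by
        simp only [R', hinv, h, ne_eq, hi.symm, not_false_eq_true, if_true]
      have := hq (m i) hi'
      rw [hinv] at this
      rw [e1, e2, pairPower_symm, add_comm]
      exact ⟨S_symm μ X γ Pmax this.1, this.2.1⟩
    · have e1 : R' i = (q i).1 := by simp only [R', hi, h, ne_eq, not_false_eq_true, if_true]
      have e2 : R' (m i) = (q i).2 := by
        simp only [R', hinv, not_lt.mpr h.le, ne_eq, hi.symm, not_false_eq_true, if_true, if_false]
      rw [e1, e2]
      exact ⟨(hq i hi).1, (hq i hi).2.1⟩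
  have hR'_m : ∀ i j, mode i = .matched j → (R' i, R' j) ∈ Sregion μ X γ Pmax i j ∧
        Qpow γ i (R' i) + Qpow γ j (R' j) = pairPower μ X γ Pmax i j := by
    intro i j h
    rw [hmode_m] at h
    obtain ⟨h1, rfl⟩ := h
    exact hR'_m0 i h1
  have hR'le : ∀ i, m i = i → R' i ≤ R i := by
    intro i hi
    by_cases h : R i ≥ shEntropy μ (X i)
    · rw [hR'_r i ((hmode_r i).2 ⟨hi, h⟩)]
      exact h
    · have hc := (hmode_c i (p i)).2 ⟨hi, h, rfl⟩
      rw [hR'_c i _ hc]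
      exact (hchild i _ hc).2
  have hgen : ∀ N i, rank i ≤ N → InitiallyDecodable μ X R' i ∨
    ∃ (k : ℕ) (s : ℕ → Fin n), 1 ≤ k ∧
      InitiallyDecodable μ X R' (s 1) ∧
      (∀ j : ℕ, 2 ≤ j → j ≤ k → R' (s j) ≥ shCondEntropy μ (X (s j)) (X (s (j - 1)))) ∧
      R' i ≥ shCondEntropy μ (X i) (X (s k)) := by
    intro N
    induction N with
    | zero =>
      intro i hi
      by_cases hm : m i = i
      · by_cases h : R i ≥ shEntropy μ (X i)
        · exact Or.inl (Or.inl (hR'_r i ((hmode_r i).2 ⟨hm, h⟩)).ge)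
        · have hc := (hmode_c i (p i)).2 ⟨hm, h, rfl⟩
          exact absurd (hchild i _ hc).1 (by omega)
      · exact Or.inl (Or.inr ⟨m i, hm, (hR'_m0 i hm).1.1⟩)
    | succ N ih =>
      intro i hi
      by_cases hm : m i = i
      · by_cases h : R i ≥ shEntropy μ (X i)
        · exact Or.inl (Or.inl (hR'_r i ((hmode_r i).2 ⟨hm, h⟩)).ge)
        · have hc := (hmode_c i (p i)).2 ⟨hm, h, rfl⟩
          have := (hchild i _ hc).1
          exact Or.inr (chain_step μ X R' (p i) i (ih _ (by omega)) (hR'_c i _ hc).ge)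
      · exact Or.inl (Or.inr ⟨m i, hm, (hR'_m0 i hm).1.1⟩)
  refine ⟨⟨mode, ?_, ?_, fun i j => ⟨hmsymm i j, hmsymm j i⟩, ?_, hacyc⟩, R', ⟨?_, ?_, ?_⟩,
    ⟨fun i => hgen _ i le_rfl, ?_⟩, hR'_r, hR'_c, hR'_m, ?_⟩
  · rintro i j h rfl
    exact lt_irrefl _ (hchild _ _ h).1
  · rintro i j h rfl
    rw [hmode_m] at h
    exact h.1 h.2
  · rintro i j - ⟨h1, h2⟩
    exact lt_asymm (hchild _ _ h1).1 (hchild _ _ h2).1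
  · intro i h
    exact (Qpow_mono γ hγ i ((hmode_r i).1 h).2).trans (hpow i)
  · intro i j h
    exact (Qpow_mono γ hγ i (hchild i j h).2).trans (hpow i)
  · intro i j h
    exact ⟨_, (hR'_m i j h).1⟩
  · intro i
    by_cases hm : m i = i
    · exact (Qpow_mono γ hγ i (hR'le i hm)).trans (hpow i)
    · exact (hR'_m0 i hm).1.2.1
  · have hsum : ∀ T : Fin n → ℝ, ∑ i, T (m i) = ∑ i, T i := fun T =>
      Equiv.sum_comp (⟨m, m, hinv, hinv⟩ : Equiv.Perm (Fin n)) T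
    have h2 : ∑ i, (Qpow γ i (R' i) + Qpow γ (m i) (R' (m i))) ≤
        ∑ i, (Qpow γ i (R i) + Qpow γ (m i) (R (m i))) := by
      refine Finset.sum_le_sum fun i _ => ?_
      by_cases hm : m i = i
      · rw [hm]
        have := Qpow_mono γ hγ i (hR'le i hm)
        linarith
      · rw [(hR'_m0 i hm).2]
        exact (hq i hm).2.2 _ _ (hSmem i hm)
    rw [Finset.sum_add_distrib, Finset.sum_add_distrib,
      hsum (fun i => Qpow γ i (R' i)), hsum (fun i => Qpow γ i (R i))] at h2
    linarith
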